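/- arXiv:1905.07145 — 2 statements merged into one kernel-verified Lean document; each statement's English description precedes it below -/
import Mathlib

section
/- No deterministic online algorithm for problem SP has competitive ratio smaller than 3: for every deterministic online algorithm A, every real c < 3 and every real γ, there exist T ∈ ℕ, β > 0 and nonnegative cost functions g_1,…,g_T such that Cost_A > c·Opt + γ, where Cost_A is the cost of the schedule produced by A on this input. -/
/-- The cost of a schedule `s` (with states encoded as reals): the operating
cost at time `t` is `(1 - s t) * g0 t + s t * g1 t`, which agrees with
`g_t(s_t)` for binary schedules, plus the switching cost `β·(s t − s (t−1))⁺`. -/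
noncomputable def cost (T : ℕ) (β : ℝ) (g0 g1 : ℕ → ℝ) (s : ℕ → ℝ) : ℝ :=
  ∑ t ∈ Finset.Icc 1 T, ((1 - s t) * g0 t + s t * g1 t + β * max (s t - s (t - 1)) 0)

/-- The offline optimal value `Opt` of problem SP: the infimum of costs over
all binary schedules starting in state `0`. -/
noncomputable def opt (T : ℕ) (β : ℝ) (g0 g1 : ℕ → ℝ) : ℝ :=
  sInf {c : ℝ | ∃ s : ℕ → ℝ, (∀ t, s t = 0 ∨ s t = 1) ∧ s 0 = 0 ∧ c = cost T β g0 g1 s}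

lemma cost_zero' (β : ℝ) (g0 g1 s : ℕ → ℝ) : cost 0 β g0 g1 s = 0 := by
  simp [cost]

lemma cost_succ' (n : ℕ) (β : ℝ) (g0 g1 s : ℕ → ℝ) :
    cost (n + 1) β g0 g1 s = cost n β g0 g1 s +
      ((1 - s (n+1)) * g0 (n+1) + s (n+1) * g1 (n+1) + β * max (s (n+1) - s n) 0) := by
  unfold cost
  rw [Finset.sum_Icc_succ_top (by omega)]
  simp

def oneS : ℕ → ℝ
  | 0 => 0
  | _ + 1 => 1

def antiS (a : ℕ → ℝ) : ℕ → ℝ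
  | 0 => 0
  | n + 1 => 1 - a n

lemma key1 (ε : ℝ) (a g0 g1 : ℕ → ℝ) (hε : 0 < ε) (hε2 : 2 * ε ≤ 1)
    (ha : ∀ t, a t = 0 ∨ a t = 1) (ha0 : a 0 = 0)
    (h0 : ∀ n, g0 (n+1) = ε * (1 - a n)) (h1 : ∀ n, g1 (n+1) = ε * a n) (n : ℕ) :
    ε * n + ε * a n ≤ cost n 1 g0 g1 a := by
  induction n with
  | zero => simp [cost_zero', ha0]
  | succ n ih =>
    rw [cost_succ', h0, h1]
    push_cast
    rcases ha n with h | h <;> rcases ha (n+1) with h' | h' <;> rw [h] at ih <;> rw [h, h'] <;>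
      norm_num <;> linarith

lemma key2 (ε : ℝ) (a g0 g1 : ℕ → ℝ) (hε : 0 < ε)
    (ha : ∀ t, a t = 0 ∨ a t = 1) (ha0 : a 0 = 0)
    (h0 : ∀ n, g0 (n+1) = ε * (1 - a n)) (h1 : ∀ n, g1 (n+1) = ε * a n) (n : ℕ) :
    cost n 1 g0 g1 (fun _ => 0) + cost n 1 g0 g1 oneS - oneS n + cost n 1 g0 g1 (antiS a)
      + max (1 - a n - antiS a n) 0 + (1 + ε) * a n ≤ (1 + 2 * ε) * cost n 1 g0 g1 a + 1 := by
  induction n with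
  | zero => simp [cost_zero', ha0, oneS, antiS]
  | succ n ih =>
    have hq : 0 ≤ ε * ε := by positivity
    have e1 : max (1 - oneS n) 0 = 1 - oneS n := by
      cases n <;> simp [oneS]
    have e2 : oneS (n+1) = 1 := rfl
    have e3 : antiS a (n+1) = 1 - a n := rfl
    simp only [cost_succ', e2, e3, h0, h1]
    rw [e1]
    rcases ha n with h | h <;> rcases ha (n+1) with h' | h' <;> rw [h] at ih <;> rw [h, h'] <;>
      norm_num at ih ⊢ <;> linarith

lemma cost_nonneg' (T : ℕ) (g0 g1 s : ℕ → ℝ) (hs : ∀ t, s t = 0 ∨ s t = 1)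
    (h0 : ∀ n, 0 ≤ g0 (n+1)) (h1 : ∀ n, 0 ≤ g1 (n+1)) : 0 ≤ cost T 1 g0 g1 s := by
  induction T with
  | zero => simp [cost_zero']
  | succ n ih =>
    rw [cost_succ']
    have hm := le_max_right (s (n+1) - s n) 0
    have := h0 n
    have := h1 n
    rcases hs (n+1) with h | h <;> rw [h] at hm ⊢ <;> linarith

noncomputable def advG (A : (ℕ → ℝ) → (ℕ → ℝ) → ℕ → ℝ) (ε : ℝ) : ℕ → (ℕ → ℝ) × (ℕ → ℝ)
  | 0 => (fun _ => 0, fun _ => 0)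
  | n + 1 =>
    (Function.update (advG A ε n).1 (n+1) (ε * (1 - A (advG A ε n).1 (advG A ε n).2 n)),
     Function.update (advG A ε n).2 (n+1) (ε * A (advG A ε n).1 (advG A ε n).2 n))

lemma advG_stable (A : (ℕ → ℝ) → (ℕ → ℝ) → ℕ → ℝ) (ε : ℝ) (n τ : ℕ) (h : τ ≤ n) :
    (advG A ε n).1 τ = (advG A ε τ).1 τ ∧ (advG A ε n).2 τ = (advG A ε τ).2 τ := by
  induction n with
  | zero => obtain rfl : τ = 0 := by omega
            simp
  | succ n ih =>
    rcases Nat.lt_or_ge n τ with h' | h'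
    · obtain rfl : τ = n + 1 := by omega
      simp
    · have hne : τ ≠ n + 1 := by omega
      rw [advG]
      simpa [Function.update_of_ne hne] using ih h'

theorem stmt3 (A : ℝ → (ℕ → ℝ) → (ℕ → ℝ) → ℕ → ℝ)
    (hBin : ∀ β g0 g1 t, A β g0 g1 t = 0 ∨ A β g0 g1 t = 1)
    (hInit : ∀ β g0 g1, A β g0 g1 0 = 0)
    (hOnline : ∀ β g0 g1 g0' g1' t,
      (∀ τ, τ ≤ t → g0 τ = g0' τ ∧ g1 τ = g1' τ) →
      A β g0 g1 t = A β g0' g1' t)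
    (c γ : ℝ) (hc : c < 3) :
    ∃ (T : ℕ) (β : ℝ), 0 < β ∧ ∃ g0 g1 : ℕ → ℝ,
      (∀ t, 1 ≤ t → t ≤ T → 0 ≤ g0 t ∧ 0 ≤ g1 t) ∧
      cost T β g0 g1 (A β g0 g1) > c * opt T β g0 g1 + γ := by
  obtain ⟨C, hcC, hC1, hC3⟩ : ∃ C : ℝ, c ≤ C ∧ 1 ≤ C ∧ C < 3 :=
    ⟨max c 1, le_max_left _ _, le_max_right _ _, max_lt hc (by norm_num)⟩
  obtain ⟨ε, hε⟩ : ∃ ε : ℝ, ε = (3 - C) / 12 := ⟨_, rfl⟩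
  have hε0 : 0 < ε := by rw [hε]; linarith
  have hε2 : 2 * ε ≤ 1 := by rw [hε]; linarith
  obtain ⟨T, hT⟩ := exists_nat_gt ((6 + 3 * γ) / (6 * ε * ε))
  rw [div_lt_iff₀ (by positivity)] at hT
  obtain ⟨g0, hg0⟩ : ∃ g : ℕ → ℝ, ∀ t, g t = (advG (A 1) ε t).1 t := ⟨_, fun _ => rfl⟩
  obtain ⟨g1, hg1⟩ : ∃ g : ℕ → ℝ, ∀ t, g t = (advG (A 1) ε t).2 t := ⟨_, fun _ => rfl⟩
  have hA : ∀ n, A 1 (advG (A 1) ε n).1 (advG (A 1) ε n).2 n = A 1 g0 g1 n := by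
    intro n
    apply hOnline
    intro τ hτ
    rw [hg0, hg1]
    exact advG_stable _ _ _ _ hτ
  have h0 : ∀ n, g0 (n+1) = ε * (1 - A 1 g0 g1 n) := by
    intro n
    rw [hg0, advG, hA]
    simp
  have h1 : ∀ n, g1 (n+1) = ε * A 1 g0 g1 n := by
    intro n
    rw [hg1, advG, hA]
    simp
  have hb := hBin 1 g0 g1
  have hi := hInit 1 g0 g1
  have n0 : ∀ n, 0 ≤ g0 (n+1) := by
    intro n
    rw [h0]
    rcases hb n with h | h <;> rw [h] <;> norm_num <;> linarith
  have n1 : ∀ n, 0 ≤ g1 (n+1) := by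
    intro n
    rw [h1]
    rcases hb n with h | h <;> rw [h] <;> norm_num <;> linarith
  refine ⟨T, 1, one_pos, g0, g1, ?_, ?_⟩
  · intro t ht _
    obtain ⟨n, rfl⟩ : ∃ n, t = n + 1 := ⟨t - 1, by omega⟩
    exact ⟨n0 n, n1 n⟩
  generalize A 1 g0 g1 = a at *
  have k1 := key1 ε a g0 g1 hε0 hε2 hb hi h0 h1 T
  have k2 := key2 ε a g0 g1 hε0 hb hi h0 h1 T
  have hopt0 : 0 ≤ opt T 1 g0 g1 := by
    apply Real.sInf_nonneg
    rintro x ⟨s, hs, _, rfl⟩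
    exact cost_nonneg' T g0 g1 s hs n0 n1
  have hle : ∀ s : ℕ → ℝ, (∀ t, s t = 0 ∨ s t = 1) → s 0 = 0 →
      opt T 1 g0 g1 ≤ cost T 1 g0 g1 s := by
    intro s hs hs0
    apply csInf_le
    · refine ⟨0, ?_⟩
      rintro x ⟨s, hs, _, rfl⟩
      exact cost_nonneg' T g0 g1 s hs n0 n1
    · exact ⟨s, hs, hs0, rfl⟩
  have l0 := hle (fun _ => 0) (fun _ => Or.inl rfl) rfl
  have l1 := hle oneS (fun t => by cases t <;> simp [oneS]) rfl
  have l2 := hle (antiS a) (fun t => by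
    cases t with
    | zero => simp [antiS]
    | succ n => rcases hb n with h | h <;> simp [antiS, h]) rfl
  have o1 : oneS T ≤ 1 := by cases T <;> simp [oneS]
  have m := le_max_right (1 - a T - antiS a T) 0
  have aT : 0 ≤ a T := by rcases hb T with h | h <;> rw [h] <;> norm_num
  have p1 : 0 ≤ ε * a T := by positivity
  generalize cost T 1 g0 g1 a = K at *
  generalize opt T 1 g0 g1 = O at *
  have k3 : 3 * O ≤ (1 + 2 * ε) * K + 2 := by linarith
  have k4 : ε * T ≤ K := by linarith
  by_contra hcon
  push Not at hcon
  have q1 : K ≤ C * O + γ := by nlinarith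
  have q2 : C * (3 * O) ≤ C * ((1 + 2 * ε) * K + 2) := by
    apply mul_le_mul_of_nonneg_left k3; linarith
  have hCe : C = 3 - 12 * ε := by rw [hε]; ring
  have hK : 0 ≤ K := le_trans (by positivity) k4
  have q3 : 6 * ε * K ≤ 6 + 3 * γ := by
    have : 0 ≤ ε * ε * K := by positivity
    rw [hCe] at q1 q2
    nlinarith
  have q4 : 6 * ε * (ε * T) ≤ 6 * ε * K := by
    apply mul_le_mul_of_nonneg_left k4; positivity
  linarith
end

section
/- Per-step potential inequality (clamping at 1): let β > 0, z ∈ [0,1], x' ∈ [0,1], and f₀ ≥ β·(1 − x'). Then β·(1 − x') + Φ(1,z) − Φ(x',z) − 2(1 − z)·f₀ ≤ −(β/2)·(x' − 1)² ≤ 0, where Φ(x,z) := β·(x²/2 + 2z − 2z·x). -/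
/-- The potential function `Φ(x,z) = β·(x²/2 + 2z − 2z·x)` used in the
competitive analysis of the continuous algorithm cCHASE. -/
noncomputable def Phi (β x z : ℝ) : ℝ := β * (x ^ 2 / 2 + 2 * z - 2 * z * x)

/-- per-step potential inequality, clamping at 1: if `β > 0`,
`z ∈ [0,1]`, `x' ∈ [0,1]` and `f₀ ≥ β·(1 − x')`, then
`β·(1 − x') + Φ(1,z) − Φ(x',z) − 2(1 − z)·f₀ ≤ −(β/2)·(x' − 1)² ≤ 0`. -/
theorem stmt12 (β f₀ z x' : ℝ) (hβ : 0 < β)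
    (hz : z ∈ Set.Icc (0 : ℝ) 1) (hx' : x' ∈ Set.Icc (0 : ℝ) 1)
    (hf : β * (1 - x') ≤ f₀) :
    β * (1 - x') + Phi β 1 z - Phi β x' z - 2 * (1 - z) * f₀
      ≤ -(β / 2) * (x' - 1) ^ 2 ∧
    -(β / 2) * (x' - 1) ^ 2 ≤ 0 := by
  obtain ⟨hz0, hz1⟩ := hz
  constructor
  · unfold Phi
    nlinarith [mul_le_mul_of_nonneg_left hf (sub_nonneg.mpr hz1)]
  · nlinarith [mul_nonneg hβ.le (sq_nonneg (x' - 1))]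
end
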